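/- Let N ≥ 1. Assume that D₀ has a Liouvillian first integral of some degree and has no 1-Darbouxian first integral and no rational first integral of any degree. Then D₀ has a Liouvillian first integral of degree ≤ N defined over K if and only if D₀ has a Liouvillian first integral of degree ≤ N. -/

import Mathlib

/-!
The equation defining a Liouvillian first integral is affine in `F`, with the 1-Darbouxian
equation as its homogeneous part.  In the absence of 1-Darbouxian first integrals the solution
`F ∈ K̄(x,y)` is therefore unique (`LiouEq.unique`), hence fixed by `Gal(K̄/K)`.  To descend a
representation `F = p/q` without changing the degree bound, consider all pairs `(p, q)` with
`p = F q` and degrees `≤ N`: these form a Galois-stable vector space.  Take a pair with `q ≠ 0` of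
minimal support, normalised so that some coefficient of `q` is `1`.  For an automorphism `σ`, the
difference `σ q - q` has smaller support than `q`, so it vanishes, and then `σ p = p` as well
(`exists_fixed`).  Since `K̄/K` is Galois in characteristic zero, `p` and `q` have coefficients
in `K`.
-/

/-!
# Descent to `K` for Liouvillian first integrals (Corollary `cor:liouvdansK`)

Suppose `D₀ = A ∂x + B ∂y` has a Liouvillian first integral (of some degree) and no
1-Darbouxian and no rational first integral (of any degree).  Then `D₀` has a Liouvillian
first integral of degree ≤ N defined over `K` if and only if it has a Liouvillian first
integral of degree ≤ N (over the algebraic closure `K̄`).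
-/

open MvPolynomial

namespace ExtacticPaper

noncomputable section

variable {L : Type*}

/-- `wPol A B r` equals `A^(r+1) * ∂y^r (B/A)` as a polynomial. -/
def wPol [CommRing L] (A B : MvPolynomial (Fin 2) L) : ℕ → MvPolynomial (Fin 2) L
  | 0 => B
  | r + 1 => A * pderiv (1 : Fin 2) (wPol A B r) - (r + 1) • (wPol A B r * pderiv (1 : Fin 2) A)

/-- The derivation `D₀ = A ∂x + B ∂y` of `L[x,y]`. -/
def derD0 [CommRing L] (A B p : MvPolynomial (Fin 2) L) : MvPolynomial (Fin 2) L :=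
  A * pderiv (0 : Fin 2) p + B * pderiv (1 : Fin 2) p

/-- `D₀` has a rational first integral of degree ≤ N (with witness over `L`):
a nonconstant `F = p/q` with `deg p, deg q ≤ N` and `D₀(F) = 0`, the latter encoded by the
representation-independent identity `q·D₀(p) = p·D₀(q)`. -/
def HasRatFI [Field L] (A B : MvPolynomial (Fin 2) L) (N : ℕ) : Prop :=
  ∃ p q : MvPolynomial (Fin 2) L, q ≠ 0 ∧ p.totalDegree ≤ N ∧ q.totalDegree ≤ N ∧
    q * derD0 A B p = p * derD0 A B q ∧ ∀ c : L, p ≠ C c * q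

/-- `D₀` has a `k`-Darbouxian first integral of degree ≤ N (with witness over `L`):
a nonzero `G = p/q` with `deg p, deg q ≤ N` and `D₀(G) = −k·A·∂y(B/A)·G`; since
`A·∂y(B/A) = w₁/A`, this is encoded by `A·(q·D₀(p) − p·D₀(q)) = −k·w₁·p·q`. -/
def HasDarbFI [Field L] (A B : MvPolynomial (Fin 2) L) (k N : ℕ) : Prop :=
  ∃ p q : MvPolynomial (Fin 2) L, q ≠ 0 ∧ p ≠ 0 ∧ p.totalDegree ≤ N ∧ q.totalDegree ≤ N ∧
    A * (q * derD0 A B p - p * derD0 A B q)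
      = -((k : MvPolynomial (Fin 2) L) * wPol A B 1 * p * q)

/-- Base change of a polynomial from `K` to the algebraic closure of `K`. -/
def mapAC {K : Type*} [Field K] (p : MvPolynomial (Fin 2) K) :
    MvPolynomial (Fin 2) (AlgebraicClosure K) :=
  MvPolynomial.map (algebraMap K (AlgebraicClosure K)) p

/-- `D₀` has a Liouvillian first integral of degree ≤ N (with witness over `L`):
an `F = p/q` with `deg p, deg q ≤ N` and `D₀(F) = −A·∂y(B/A)·F − A·∂y²(B/A)`; since
`A·∂y(B/A) = w₁/A` and `A·∂y²(B/A) = w₂/A²`, this is encoded by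
`A²·(q·D₀(p) − p·D₀(q)) = −A·w₁·p·q − w₂·q²`. -/
def HasLiouFI [Field L] (A B : MvPolynomial (Fin 2) L) (N : ℕ) : Prop :=
  ∃ p q : MvPolynomial (Fin 2) L, q ≠ 0 ∧ p.totalDegree ≤ N ∧ q.totalDegree ≤ N ∧
    A ^ 2 * (q * derD0 A B p - p * derD0 A B q)
      = -(A * wPol A B 1 * p * q) - wPol A B 2 * q ^ 2

lemma totalDegree_map_le' {R S : Type*} [CommRing R] [CommRing S] (f : R →+* S)
    (p : MvPolynomial (Fin 2) R) : (map f p).totalDegree ≤ p.totalDegree :=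
  Finset.sup_mono (support_map_subset f p)

lemma totalDegree_map_of_inj {R S : Type*} [CommRing R] [CommRing S] {f : R →+* S}
    (hf : Function.Injective f) (p : MvPolynomial (Fin 2) R) :
    (map f p).totalDegree = p.totalDegree := by
  rw [totalDegree, totalDegree, support_map_of_injective p hf]

/-- The pair `(p, q)` satisfies the (denominator-free) equation of a Liouvillian first integral
`p / q`.  The condition `q ≠ 0` is not included. -/
def LiouEq [CommRing L] (A B p q : MvPolynomial (Fin 2) L) : Prop :=
  A ^ 2 * (q * derD0 A B p - p * derD0 A B q)
    = -(A * wPol A B 1 * p * q) - wPol A B 2 * q ^ 2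

lemma derD0_mul [CommRing L] (A B p q : MvPolynomial (Fin 2) L) :
    derD0 A B (p * q) = p * derD0 A B q + q * derD0 A B p := by
  simp only [derD0, Derivation.leibniz, smul_eq_mul]
  ring

lemma derD0_sub [CommRing L] (A B p q : MvPolynomial (Fin 2) L) :
    derD0 A B (p - q) = derD0 A B p - derD0 A B q := by
  simp only [derD0, map_sub]
  ring

lemma map_derD0 {M : Type*} [CommRing L] [CommRing M] (f : L →+* M)
    (A B p : MvPolynomial (Fin 2) L) :
    map f (derD0 A B p) = derD0 (map f A) (map f B) (map f p) := by
  simp [derD0, pderiv_map]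

lemma map_wPol {M : Type*} [CommRing L] [CommRing M] (f : L →+* M)
    (A B : MvPolynomial (Fin 2) L) (r : ℕ) :
    map f (wPol A B r) = wPol (map f A) (map f B) r := by
  induction r with
  | zero => rfl
  | succ r ih => simp [wPol, ← ih, pderiv_map]

lemma LiouEq.map {M : Type*} [CommRing L] [CommRing M] (f : L →+* M)
    {A B p q : MvPolynomial (Fin 2) L} (h : LiouEq A B p q) :
    LiouEq (map f A) (map f B) (map f p) (map f q) := by
  have := congrArg (MvPolynomial.map f) h
  simpa only [LiouEq, map_mul, map_sub, map_neg, map_pow, map_derD0, map_wPol] using this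

/-- Whether `p / q` is a Liouvillian first integral depends only on the fraction. -/
lemma LiouEq.transfer [Field L] {A B p q r s : MvPolynomial (Fin 2) L} (h : LiouEq A B p q)
    (hq : q ≠ 0) (e : r * q = p * s) : LiouEq A B r s := by
  have hD := congrArg (derD0 A B) e
  rw [derD0_mul, derD0_mul] at hD
  unfold LiouEq at *
  apply mul_left_cancel₀ (pow_ne_zero 2 hq)
  linear_combination s ^ 2 * h + A ^ 2 * q * s * hD
    - A ^ 2 * (q * derD0 A B s + s * derD0 A B q) * e + A * wPol A B 1 * q * s * e

/-- The difference of two Liouvillian first integrals is zero or 1-Darbouxian. -/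
lemma LiouEq.unique [Field L] {A B p q p' q' : MvPolynomial (Fin 2) L} (hA : A ≠ 0)
    (hnodarb : ¬ ∃ M : ℕ, HasDarbFI A B 1 M) (h : LiouEq A B p q) (h' : LiouEq A B p' q')
    (hq : q ≠ 0) (hq' : q' ≠ 0) : p * q' = p' * q := by
  by_contra hne
  refine hnodarb ⟨max (p * q' - p' * q).totalDegree (q * q').totalDegree, p * q' - p' * q, q * q',
    mul_ne_zero hq hq', sub_ne_zero.2 hne, le_max_left _ _, le_max_right _ _, ?_⟩
  unfold LiouEq at *
  apply mul_left_cancel₀ hA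
  rw [derD0_sub, derD0_mul, derD0_mul, derD0_mul]
  push_cast
  linear_combination (-1) * q ^ 2 * h' + q' ^ 2 * h

/-- A Galois-invariant representative of degree `≤ N` of the unique Liouvillian first integral,
obtained by minimising the support of the denominator. -/
lemma exists_fixed {K E : Type*} [Field K] [Field E] [Algebra K E]
    {A B : MvPolynomial (Fin 2) K} {N : ℕ} (hA : A ≠ 0)
    (hnodarb : ¬ ∃ M : ℕ, HasDarbFI (map (algebraMap K E) A) (map (algebraMap K E) B) 1 M)
    (h : HasLiouFI (map (algebraMap K E) A) (map (algebraMap K E) B) N) :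
    ∃ p q : MvPolynomial (Fin 2) E, q ≠ 0 ∧ p.totalDegree ≤ N ∧ q.totalDegree ≤ N ∧
      LiouEq (map (algebraMap K E) A) (map (algebraMap K E) B) p q ∧
      ∀ σ : E ≃ₐ[K] E, map (σ : E →+* E) p = p ∧ map (σ : E →+* E) q = q := by
  classical
  set A' := map (algebraMap K E) A with hA'
  set B' := map (algebraMap K E) B with hB'
  have hA0 : A' ≠ 0 := (map_ne_zero_iff _ (map_injective _ (algebraMap K E).injective)).2 hA
  have hex : ∃ n : ℕ, ∃ p q : MvPolynomial (Fin 2) E, q ≠ 0 ∧ p.totalDegree ≤ N ∧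
      q.totalDegree ≤ N ∧ LiouEq A' B' p q ∧ q.support.card = n := by
    obtain ⟨p, q, h0, h1, h2, h3⟩ := h
    exact ⟨_, p, q, h0, h1, h2, h3, rfl⟩
  obtain ⟨p₀, q₀, hq₀, hp₀N, hq₀N, heq₀, hcard₀⟩ := Nat.find_spec hex
  obtain ⟨m, hm⟩ := ne_zero_iff.1 hq₀
  -- Normalise the coefficient of `m` in the denominator to `1`.
  obtain ⟨p, q, hq, hpN, hqN, heq, hcard, hm1⟩ : ∃ p q : MvPolynomial (Fin 2) E, q ≠ 0 ∧
      p.totalDegree ≤ N ∧ q.totalDegree ≤ N ∧ LiouEq A' B' p q ∧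
      q.support.card ≤ Nat.find hex ∧ coeff m q = 1 := by
    have hm1 : coeff m (C (coeff m q₀)⁻¹ * q₀) = 1 := by rw [coeff_C_mul, inv_mul_cancel₀ hm]
    refine ⟨C (coeff m q₀)⁻¹ * p₀, C (coeff m q₀)⁻¹ * q₀, ?_, ?_, ?_, ?_, ?_, hm1⟩
    · intro h0
      simp [h0] at hm1
    · rw [← smul_eq_C_mul]
      exact (totalDegree_smul_le _ _).trans hp₀N
    · rw [← smul_eq_C_mul]
      exact (totalDegree_smul_le _ _).trans hq₀N
    · exact heq₀.transfer hq₀ (by ring)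
    · rw [← hcard₀, ← smul_eq_C_mul]
      exact Finset.card_le_card support_smul
  refine ⟨p, q, hq, hpN, hqN, heq, fun σ => ?_⟩
  have hinj : Function.Injective (σ : E →+* E) := σ.injective
  have hfix (P : MvPolynomial (Fin 2) K) :
      map (σ : E →+* E) (map (algebraMap K E) P) = map (algebraMap K E) P := by
    rw [map_map]
    congr 2
    exact RingHom.ext σ.commutes
  have hσq : map (σ : E →+* E) q ≠ 0 := (map_ne_zero_iff _ (map_injective _ hinj)).2 hq
  have heqσ : LiouEq A' B' (map (σ : E →+* E) p) (map (σ : E →+* E) q) := by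
    have := heq.map (σ : E →+* E)
    rwa [hA', hB', hfix, hfix] at this
  have hu := heqσ.unique hA0 hnodarb heq hσq hq
  have hqfix : map (σ : E →+* E) q = q := by
    by_contra hne
    -- The pair `(σ p - p, σ q - q)` would have a smaller support, as it misses `m`.
    have hlt : (map (σ : E →+* E) q - q).support.card < Nat.find hex := by
      refine lt_of_lt_of_le (Finset.card_lt_card ?_) hcard
      refine (Finset.ssubset_iff_of_subset fun n hn => ?_).2 ⟨m, ?_, ?_⟩
      · rw [mem_support_iff] at hn ⊢
        intro h0
        simp [coeff_map, h0] at hn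
      · simp [mem_support_iff, hm1]
      · simp [mem_support_iff, coeff_map, hm1]
    refine Nat.find_min hex hlt ⟨map (σ : E →+* E) p - p, map (σ : E →+* E) q - q,
      sub_ne_zero.2 hne, ?_, ?_, heq.transfer hq (by linear_combination hu), rfl⟩
    · exact (totalDegree_sub _ _).trans (max_le ((totalDegree_map_le' _ _).trans hpN) hpN)
    · exact (totalDegree_sub _ _).trans (max_le ((totalDegree_map_le' _ _).trans hqN) hqN)
  refine ⟨?_, hqfix⟩
  rw [hqfix] at hu
  exact mul_right_cancel₀ hq hu

lemma exists_map_eq_of_fixed {K E : Type*} [Field K] [Field E] [Algebra K E] [IsGalois K E]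
    {p : MvPolynomial (Fin 2) E} (h : ∀ σ : E ≃ₐ[K] E, map (σ : E →+* E) p = p) :
    ∃ p₀ : MvPolynomial (Fin 2) K, map (algebraMap K E) p₀ = p := by
  change p ∈ Set.range (map (algebraMap K E))
  rw [mem_range_map_iff_coeffs_subset]
  intro c hc
  obtain ⟨n, -, rfl⟩ := mem_coeffs_iff.1 hc
  refine IntermediateField.mem_bot.1 ((InfiniteGalois.mem_bot_iff_fixed _).2 ?_)
  intro σ
  conv_rhs => rw [← h σ, coeff_map]
  rfl

/-- **Corollary `cor:liouvdansK`** of Chèze–Combot. -/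
theorem liouvillian_defined_over_K {K : Type*} [Field K] [CharZero K]
    (A B : MvPolynomial (Fin 2) K) (hA : A ≠ 0) (hB : B ≠ 0)
    (hcop : ∀ p : MvPolynomial (Fin 2) K, p ∣ A → p ∣ B → IsUnit p)
    (d : ℕ) (hd : d = max A.totalDegree B.totalDegree) (hd1 : 1 ≤ d)
    (N : ℕ) (hN : 1 ≤ N)
    (hliou : ∃ M : ℕ, HasLiouFI (mapAC A) (mapAC B) M)
    (hnodarb : ¬ ∃ M : ℕ, HasDarbFI (mapAC A) (mapAC B) 1 M)
    (hnorat : ¬ ∃ M : ℕ, HasRatFI (mapAC A) (mapAC B) M) :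
    HasLiouFI A B N ↔ HasLiouFI (mapAC A) (mapAC B) N := by
  have hinj : Function.Injective (map (σ := Fin 2) (algebraMap K (AlgebraicClosure K))) :=
    map_injective _ (algebraMap K (AlgebraicClosure K)).injective
  have hdeg (P : MvPolynomial (Fin 2) K) :
      (map (algebraMap K (AlgebraicClosure K)) P).totalDegree = P.totalDegree :=
    totalDegree_map_of_inj (algebraMap K (AlgebraicClosure K)).injective P
  constructor
  · rintro ⟨p, q, hq, hpN, hqN, h⟩
    have h' : LiouEq A B p q := h
    exact ⟨mapAC p, mapAC q, (map_ne_zero_iff _ hinj).2 hq, (hdeg p).trans_le hpN,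
      (hdeg q).trans_le hqN, h'.map _⟩
  · intro h
    obtain ⟨p, q, hq, hpN, hqN, heq, hfix⟩ := exists_fixed hA hnodarb h
    obtain ⟨p, rfl⟩ := exists_map_eq_of_fixed fun σ => (hfix σ).1
    obtain ⟨q, rfl⟩ := exists_map_eq_of_fixed fun σ => (hfix σ).2
    refine ⟨p, q, (map_ne_zero_iff _ hinj).1 hq, (hdeg p).ge.trans hpN, (hdeg q).ge.trans hqN,
      hinj ?_⟩
    simpa only [LiouEq, map_mul, map_sub, map_neg, map_pow, map_derD0, map_wPol] using heq

end
end ExtacticPaper
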